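/- Let ρ₀ satisfy the stated first-order equation with limits a and b at ∓∞. (i) Every bounded, twice continuously differentiable v : ℝ → ℝ with v''(z) = f_A(ρ₀(z))v(z) for all z ∈ ℝ is of the form v = c·ρ₀' for some constant c ∈ ℝ. (ii) Every bounded, twice continuously differentiable v : ℝ → ℝ with v''(z) = f_B(ρ₀(z))v(z) for all z ∈ ℝ is of the form v = c·ρ₀ for some constant c ∈ ℝ. -/

import Mathlib

/-!
For two solutions `v`, `w` of `y'' = q y` the Wronskian `W = v' w - v w'` is a constant and
`(v w)' = W + 2 v w'`. If `v` is bounded near `+∞` while `w` converges and `w' → 0` there, then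
`(v w)' → W` although `v w` is bounded, so `W = 0`; and if `w` has no zeros, `v / w` is constant.

A front solves `ρ₀' = g(ρ₀)`. With `F(ρ) = f_B(ρ) ρ` one has `g' g = F` and `F' = f_A`, so
`ρ₀'' = F(ρ₀) = f_B(ρ₀) ρ₀`, and differentiating once more `ρ₀''' = f_A(ρ₀) ρ₀'`. Hence `w = ρ₀'`
and `w = ρ₀` are positive solutions of the two equations, and `g(b) = F(b) = 0` gives `w' → 0`.
-/

open Filter

/-- `f_A(ρ) = (ρ² − a²)(ρ² − b²)(2ρ² − a² − b²) + 2((2ρ² − a² − b²)² + 2(ρ² − a²)(ρ² − b²))ρ²`. -/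
noncomputable def fA (a b ρ : ℝ) : ℝ :=
  (ρ ^ 2 - a ^ 2) * (ρ ^ 2 - b ^ 2) * (2 * ρ ^ 2 - a ^ 2 - b ^ 2)
    + 2 * ((2 * ρ ^ 2 - a ^ 2 - b ^ 2) ^ 2
        + 2 * (ρ ^ 2 - a ^ 2) * (ρ ^ 2 - b ^ 2)) * ρ ^ 2

/-- `f_B(ρ) = (ρ² − a²)(ρ² − b²)(2ρ² − a² − b²)`. -/
noncomputable def fB (a b ρ : ℝ) : ℝ :=
  (ρ ^ 2 - a ^ 2) * (ρ ^ 2 - b ^ 2) * (2 * ρ ^ 2 - a ^ 2 - b ^ 2)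

open Asymptotics Set
open scoped Topology

theorem eq_zero_of_tendsto_deriv_of_isLittleO {f f' : ℝ → ℝ} {L : ℝ}
    (hf : ∀ z, HasDerivAt f (f' z) z) (hf' : Tendsto f' atTop (𝓝 L))
    (hfo : f =o[atTop] (id : ℝ → ℝ)) : L = 0 := by
  have exists_slope : ∀ z : ℝ, 0 < z → ∃ ξ ∈ Ioo z (2 * z), f' ξ = (f (2 * z) - f z) / z := by
    intro z hz
    obtain ⟨ξ, hξ, hslope⟩ := exists_hasDerivAt_eq_slope f f' (show z < 2 * z by linarith)
      (fun x _ => (hf x).continuousAt.continuousWithinAt) (fun x _ => hf x)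
    exact ⟨ξ, hξ, by rw [hslope]; ring_nf⟩
  choose! ξ hξ hslope using exists_slope
  have hξ_top : Tendsto ξ atTop atTop :=
    tendsto_atTop_mono' _ ((eventually_gt_atTop 0).mono fun z hz => (hξ z hz).1.le) tendsto_id
  have slope_tendsto : Tendsto (fun z => (f (2 * z) - f z) / z) atTop (𝓝 0) := by
    have two_mul_top : Tendsto (fun z : ℝ => 2 * z) atTop atTop :=
      tendsto_id.const_mul_atTop two_pos
    have f_two_mul : (fun z => f (2 * z)) =o[atTop] (id : ℝ → ℝ) :=
      (hfo.comp_tendsto two_mul_top).trans_isBigO ((isBigO_refl id atTop).const_mul_left 2)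
    exact (f_two_mul.sub hfo).tendsto_div_nhds_zero
  refine tendsto_nhds_unique ((hf'.comp hξ_top).congr' ?_) slope_tendsto
  filter_upwards [eventually_gt_atTop 0] with z hz using hslope z hz

/-- The Wronskian `v' w - v w'` of two real functions, meaningful where both are differentiable. -/
noncomputable def realWronskian (v w : ℝ → ℝ) (z : ℝ) : ℝ :=
  deriv v z * w z - v z * deriv w z

theorem exists_eq_const_mul_of_realWronskian_eq_zero {v w : ℝ → ℝ} (hv : Differentiable ℝ v)
    (hw : Differentiable ℝ w) (hw₀ : ∀ z, w z ≠ 0) (hvw : ∀ z, realWronskian v w z = 0) :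
    ∃ c : ℝ, ∀ z, v z = c * w z := by
  have deriv_div_eq_zero (z : ℝ) : deriv (v / w) z = 0 := by
    rw [deriv_div (hv z) (hw z) (hw₀ z)]
    exact div_eq_zero_iff.mpr (Or.inl (hvw z))
  refine ⟨v 0 / w 0, fun z => (div_eq_iff (hw₀ z)).mp ?_⟩
  exact is_const_of_deriv_eq_zero (hv.div hw hw₀) deriv_div_eq_zero z 0

/-- `v` is a classical solution on the whole line of the zero-energy Schrödinger equation
`v'' = q v`. Both derivatives are required to exist, so that `deriv` takes no junk value. -/
structure IsSchrodingerSolution (q v : ℝ → ℝ) : Prop where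
  differentiable : Differentiable ℝ v
  hasDerivAt_deriv : ∀ z, HasDerivAt (deriv v) (q z * v z) z

namespace IsSchrodingerSolution

variable {q v w : ℝ → ℝ}

theorem of_contDiff (hv : ContDiff ℝ 2 v) (hq : ∀ z, deriv (deriv v) z = q z * v z) :
    IsSchrodingerSolution q v where
  differentiable := hv.differentiable two_ne_zero
  hasDerivAt_deriv z := hq z ▸ (hv.differentiable_deriv_two z).hasDerivAt

theorem hasDerivAt (hv : IsSchrodingerSolution q v) (z : ℝ) : HasDerivAt v (deriv v z) z :=
  (hv.differentiable z).hasDerivAt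

theorem realWronskian_eq (hv : IsSchrodingerSolution q v) (hw : IsSchrodingerSolution q w)
    (x y : ℝ) : realWronskian v w x = realWronskian v w y := by
  have hasDerivAt_zero (z : ℝ) : HasDerivAt (realWronskian v w) 0 z :=
    (((hv.hasDerivAt_deriv z).mul (hw.hasDerivAt z)).sub
      ((hv.hasDerivAt z).mul (hw.hasDerivAt_deriv z))).congr_deriv (by ring)
  exact is_const_of_deriv_eq_zero (fun z => (hasDerivAt_zero z).differentiableAt)
    (fun z => (hasDerivAt_zero z).deriv) x y

theorem realWronskian_eq_zero (hv : IsSchrodingerSolution q v) (hw : IsSchrodingerSolution q w)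
    (hvw : (v * w) =o[atTop] (id : ℝ → ℝ)) (hvw' : Tendsto (v * deriv w) atTop (𝓝 0)) (z : ℝ) :
    realWronskian v w z = 0 := by
  have hasDerivAt_mul (x : ℝ) :
      HasDerivAt (v * w) (realWronskian v w z + 2 * (v * deriv w) x) x := by
    refine ((hv.hasDerivAt x).mul (hw.hasDerivAt x)).congr_deriv ?_
    rw [hv.realWronskian_eq hw z x, realWronskian, Pi.mul_apply]
    ring
  refine eq_zero_of_tendsto_deriv_of_isLittleO hasDerivAt_mul ?_ hvw
  simpa using (hvw'.const_mul 2).const_add (realWronskian v w z)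

theorem exists_eq_const_mul (hv : IsSchrodingerSolution q v) (hw : IsSchrodingerSolution q w)
    (hw₀ : ∀ z, w z ≠ 0) (hv_bdd : v =O[atTop] (1 : ℝ → ℝ)) {l : ℝ}
    (hw_lim : Tendsto w atTop (𝓝 l)) (hw'_lim : Tendsto (deriv w) atTop (𝓝 0)) :
    ∃ c : ℝ, ∀ z, v z = c * w z := by
  have mul_isBigO : (v * w) =O[atTop] (1 : ℝ → ℝ) :=
    (hv_bdd.mul (hw_lim.isBigO_one ℝ)).congr_right fun _ => mul_one 1
  have mul_isLittleO : (v * w) =o[atTop] (id : ℝ → ℝ) :=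
    mul_isBigO.trans_isLittleO (isLittleO_const_id_atTop 1)
  have mul_deriv_tendsto : Tendsto (v * deriv w) atTop (𝓝 0) :=
    (isLittleO_one_iff ℝ).mp <|
      (hv_bdd.mul_isLittleO ((isLittleO_one_iff ℝ).mpr hw'_lim)).congr_right fun _ => mul_one 1
  exact exists_eq_const_mul_of_realWronskian_eq_zero hv.differentiable hw.differentiable hw₀
    (hv.realWronskian_eq_zero hw mul_isLittleO mul_deriv_tendsto)

end IsSchrodingerSolution

/-- The vector field `g` on the line whose integral curves `ρ' = g(ρ)` are the fronts. -/
noncomputable def frontField (a b ρ : ℝ) : ℝ :=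
  Real.sqrt 2 / 2 * (ρ ^ 2 - a ^ 2) * (b ^ 2 - ρ ^ 2)

theorem frontField_pos {a b ρ : ℝ} (ha : 0 ≤ a) (hρ : ρ ∈ Ioo a b) : 0 < frontField a b ρ := by
  have left_pos : 0 < ρ ^ 2 - a ^ 2 := sub_pos.mpr (pow_lt_pow_left₀ hρ.1 ha two_ne_zero)
  have right_pos : 0 < b ^ 2 - ρ ^ 2 :=
    sub_pos.mpr (pow_lt_pow_left₀ hρ.2 (ha.trans hρ.1.le) two_ne_zero)
  unfold frontField
  positivity

theorem hasDerivAt_frontField (a b ρ : ℝ) :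
    HasDerivAt (frontField a b) (Real.sqrt 2 * ρ * (a ^ 2 + b ^ 2 - 2 * ρ ^ 2)) ρ := by
  have sq := hasDerivAt_pow 2 ρ
  refine (((sq.sub_const (a ^ 2)).const_mul (Real.sqrt 2 / 2)).mul
    (sq.const_sub (b ^ 2))).congr_deriv ?_
  push_cast
  ring

theorem deriv_frontField_mul_frontField (a b ρ : ℝ) :
    deriv (frontField a b) ρ * frontField a b ρ = fB a b ρ * ρ := by
  have sqrt_sq : Real.sqrt 2 ^ 2 = 2 := Real.sq_sqrt zero_le_two
  rw [(hasDerivAt_frontField a b ρ).deriv, frontField, fB]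
  linear_combination (ρ / 2 * (a ^ 2 + b ^ 2 - 2 * ρ ^ 2) * (ρ ^ 2 - a ^ 2) *
    (b ^ 2 - ρ ^ 2)) * sqrt_sq

theorem hasDerivAt_fB_mul_self (a b ρ : ℝ) :
    HasDerivAt (fun x => fB a b x * x) (fA a b ρ) ρ := by
  have sq := hasDerivAt_pow 2 ρ
  refine ((((sq.sub_const (a ^ 2)).mul (sq.sub_const (b ^ 2))).mul
    (((sq.const_mul 2).sub_const (a ^ 2)).sub_const (b ^ 2))).mul
      (hasDerivAt_id ρ)).congr_deriv ?_
  simp only [fA, Pi.mul_apply, id_eq]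
  push_cast
  ring

section Front

variable {a b : ℝ} {ρ₀ : ℝ → ℝ} (hρ : ∀ z, HasDerivAt ρ₀ (frontField a b (ρ₀ z)) z)

include hρ

theorem isSchrodingerSolution_front : IsSchrodingerSolution (fun z => fB a b (ρ₀ z)) ρ₀ where
  differentiable z := (hρ z).differentiableAt
  hasDerivAt_deriv z := by
    rw [funext fun x => (hρ x).deriv, ← deriv_frontField_mul_frontField]
    exact (hasDerivAt_frontField a b (ρ₀ z)).differentiableAt.hasDerivAt.comp z (hρ z)

theorem deriv_deriv_front : deriv (deriv ρ₀) = fun z => fB a b (ρ₀ z) * ρ₀ z :=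
  funext fun z => ((isSchrodingerSolution_front hρ).hasDerivAt_deriv z).deriv

theorem isSchrodingerSolution_deriv_front :
    IsSchrodingerSolution (fun z => fA a b (ρ₀ z)) (deriv ρ₀) where
  differentiable z := ((isSchrodingerSolution_front hρ).hasDerivAt_deriv z).differentiableAt
  hasDerivAt_deriv z := by
    rw [deriv_deriv_front hρ, (hρ z).deriv]
    exact (hasDerivAt_fB_mul_self a b (ρ₀ z)).comp z (hρ z)

theorem tendsto_deriv_front (htop : Tendsto ρ₀ atTop (𝓝 b)) :
    Tendsto (deriv ρ₀) atTop (𝓝 0) := by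
  have field_eq_zero : frontField a b b = 0 := by simp [frontField]
  rw [funext fun z => (hρ z).deriv, ← field_eq_zero]
  exact (hasDerivAt_frontField a b b).continuousAt.tendsto.comp htop

theorem tendsto_deriv_deriv_front (htop : Tendsto ρ₀ atTop (𝓝 b)) :
    Tendsto (deriv (deriv ρ₀)) atTop (𝓝 0) := by
  have force_eq_zero : fB a b b * b = 0 := by simp [fB]
  rw [deriv_deriv_front hρ, ← force_eq_zero]
  exact (hasDerivAt_fB_mul_self a b b).continuousAt.tendsto.comp htop

theorem statement14_general (ha : 0 ≤ a) (hbnd : ∀ z, ρ₀ z ∈ Ioo a b)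
    (htop : Tendsto ρ₀ atTop (𝓝 b)) :
    (∀ v : ℝ → ℝ, IsSchrodingerSolution (fun z => fA a b (ρ₀ z)) v →
      v =O[atTop] (1 : ℝ → ℝ) → ∃ c : ℝ, ∀ z, v z = c * deriv ρ₀ z) ∧
    (∀ v : ℝ → ℝ, IsSchrodingerSolution (fun z => fB a b (ρ₀ z)) v →
      v =O[atTop] (1 : ℝ → ℝ) → ∃ c : ℝ, ∀ z, v z = c * ρ₀ z) := by
  have deriv_ne_zero (z : ℝ) : deriv ρ₀ z ≠ 0 := (hρ z).deriv ▸ (frontField_pos ha (hbnd z)).ne'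
  have front_ne_zero (z : ℝ) : ρ₀ z ≠ 0 := (ha.trans_lt (hbnd z).1).ne'
  have deriv_tendsto := tendsto_deriv_front hρ htop
  exact ⟨fun _ hv hv_bdd => hv.exists_eq_const_mul (isSchrodingerSolution_deriv_front hρ)
      deriv_ne_zero hv_bdd deriv_tendsto (tendsto_deriv_deriv_front hρ htop),
    fun _ hv hv_bdd => hv.exists_eq_const_mul (isSchrodingerSolution_front hρ)
      front_ne_zero hv_bdd htop deriv_tendsto⟩

end Front

/-- (i) Every bounded `C²` solution of `v'' = f_A(ρ₀)v` is a multiple of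
`ρ₀'`. (ii) Every bounded `C²` solution of `v'' = f_B(ρ₀)v` is a multiple of `ρ₀`. -/
theorem statement14 (a b : ℝ) (ha : 0 < a) (hab : a < b) (ρ₀ : ℝ → ℝ)
    (hreg : ContDiff ℝ 1 ρ₀)
    (hderiv : ∀ z, deriv ρ₀ z =
      Real.sqrt 2 / 2 * ((ρ₀ z) ^ 2 - a ^ 2) * (b ^ 2 - (ρ₀ z) ^ 2))
    (hbnd : ∀ z, a < ρ₀ z ∧ ρ₀ z < b)
    (hbot : Tendsto ρ₀ atBot (nhds a))
    (htop : Tendsto ρ₀ atTop (nhds b)) :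
    (∀ v : ℝ → ℝ, ContDiff ℝ 2 v → (∃ M, ∀ z, |v z| ≤ M) →
      (∀ z, deriv (deriv v) z = fA a b (ρ₀ z) * v z) →
      ∃ c : ℝ, ∀ z, v z = c * deriv ρ₀ z) ∧
    (∀ v : ℝ → ℝ, ContDiff ℝ 2 v → (∃ M, ∀ z, |v z| ≤ M) →
      (∀ z, deriv (deriv v) z = fB a b (ρ₀ z) * v z) →
      ∃ c : ℝ, ∀ z, v z = c * ρ₀ z) := by
  have hρ (z : ℝ) : HasDerivAt ρ₀ (frontField a b (ρ₀ z)) z :=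
    (hreg.differentiable one_ne_zero z).hasDerivAt.congr_deriv (hderiv z)
  have isBigO_one {v : ℝ → ℝ} (hv : ∃ M, ∀ z, |v z| ≤ M) : v =O[atTop] (1 : ℝ → ℝ) :=
    let ⟨M, hM⟩ := hv
    .of_bound M (.of_forall fun z => by simpa using hM z)
  obtain ⟨hA, hB⟩ := statement14_general hρ ha.le hbnd htop
  exact ⟨fun v hv hv_bdd hq => hA v (.of_contDiff hv hq) (isBigO_one hv_bdd),
    fun v hv hv_bdd hq => hB v (.of_contDiff hv hq) (isBigO_one hv_bdd)⟩
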